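/- The real Gamma function satisfies Γ(1/30) = (3^(9/20) · √φ · √(√15 + ψ) / (√π · 2^(16/15) · 5^(1/6))) · Γ(1/3) · Γ(1/5), where φ = 5 + √5 and ψ = √(5 + 2√5). -/

import Mathlib

open Real

/-!
Legendre's duplication formula at `1/30` and Euler's reflection formula express `Γ(1/30)` through
`Γ(1/15) Γ(7/15)`. Gauss' multiplication formula, with three factors at `1/15` and `2/15` and with
five factors at `1/15`, gives three relations between the values `Γ(k/15)`; in their product,
reflection eliminates everything except the square of `Γ(1/15) Γ(7/15)`, `Γ(1/3)` and `Γ(1/5)`. The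
sines that reflection introduces combine to the radicals.

The multiplication formula itself comes from the Bohr–Mollerup theorem. Its constant is the product
of the `Γ(k/n)` for `0 < k < n`, whose square is evaluated by reflection and
`∏ 2 sin(πk/n) = ∏ |1 - ζᵏ| = n`, where `ζ` is a primitive `n`-th root of unity.
-/

section MultiplicationFormula

open Finset

theorem sin_pi_mul_pos {x : ℝ} (hx₀ : 0 < x) (hx₁ : x < 1) : 0 < sin (π * x) :=
  sin_pos_of_pos_of_lt_pi (by positivity) (mul_lt_of_lt_one_right pi_pos hx₁)

theorem Gamma_mul_Gamma_mul_sin_pi {x y : ℝ} (hx : 0 < x) (hy : 0 < y) (hxy : x + y = 1) :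
    Gamma x * Gamma y * sin (π * x) = π := by
  obtain rfl : y = 1 - x := by linarith
  rw [Gamma_mul_Gamma_one_sub, div_mul_cancel₀ _ (sin_pi_mul_pos hx (by linarith)).ne']

theorem prod_two_mul_sin_pi_mul_add_one_div_add_one (n : ℕ) :
    ∏ k ∈ range n, 2 * sin (π * ((k + 1) / (n + 1))) = n + 1 := by
  have hζ := Complex.isPrimitiveRoot_exp (n + 1) n.succ_ne_zero
  have hnorm : ∀ k ∈ range n, ‖1 - Complex.exp (2 * π * Complex.I / (n + 1 : ℕ)) ^ (k + 1)‖ =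
      2 * sin (π * ((k + 1) / (n + 1))) := by
    intro k hk
    have hk : (k : ℝ) + 1 < n + 1 := by exact_mod_cast Nat.succ_lt_succ (mem_range.1 hk)
    have hsin : 0 < sin (π * ((k + 1) / (n + 1))) :=
      sin_pi_mul_pos (by positivity) ((div_lt_one (by positivity)).2 hk)
    have hpow : Complex.exp (2 * π * Complex.I / (n + 1 : ℕ)) ^ (k + 1) =
        Complex.exp (Complex.I * (2 * (π * ((k + 1) / (n + 1))) : ℝ)) := by
      rw [← Complex.exp_nat_mul]
      congr 1
      push_cast
      ring
    rw [norm_sub_rev, hpow, Complex.norm_exp_I_mul_ofReal_sub_one,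
      mul_div_cancel_left₀ _ two_ne_zero, norm_of_nonneg (by positivity)]
  rw [← prod_congr rfl hnorm, ← norm_prod, hζ.prod_one_sub_pow_eq_order]
  exact_mod_cast Complex.norm_natCast (n + 1)

theorem prod_Gamma_add_one_div_add_one (n : ℕ) :
    ∏ k ∈ range n, Gamma ((k + 1) / (n + 1)) = √((2 * π) ^ n / (n + 1)) := by
  have hpos : 0 ≤ ∏ k ∈ range n, Gamma ((k + 1) / (n + 1)) :=
    prod_nonneg fun k _ ↦ by positivity
  have hreflect : ∏ k ∈ range n, Gamma (1 - (k + 1) / (n + 1)) =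
      ∏ k ∈ range n, Gamma ((k + 1) / (n + 1)) := by
    rw [← prod_range_reflect]
    refine prod_congr rfl fun k hk ↦ ?_
    congr 1
    rw [Nat.sub_sub, Nat.cast_sub (by grind)]
    field_simp
    push_cast
    ring
  rw [← sqrt_sq hpos]
  congr 1
  calc (∏ k ∈ range n, Gamma ((k + 1) / (n + 1))) ^ 2
      = ∏ k ∈ range n, Gamma ((k + 1) / (n + 1)) * Gamma (1 - (k + 1) / (n + 1)) := by
        rw [prod_mul_distrib, hreflect, sq]
    _ = ∏ k ∈ range n, 2 * π / (2 * sin (π * ((k + 1) / (n + 1)))) :=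
        prod_congr rfl fun k _ ↦ by
          rw [Gamma_mul_Gamma_one_sub, mul_div_mul_left _ _ two_ne_zero]
    _ = (2 * π) ^ n / (n + 1) := by
        rw [prod_div_distrib, prod_const, card_range, prod_two_mul_sin_pi_mul_add_one_div_add_one]

theorem eq_mul_Gamma_of_log_convex {f : ℝ → ℝ} (hf_conv : ConvexOn ℝ (Set.Ioi 0) (log ∘ f))
    (hf_feq : ∀ {y : ℝ}, 0 < y → f (y + 1) = y * f y) (hf_pos : ∀ {y : ℝ}, 0 < y → 0 < f y)
    {s : ℝ} (hs : 0 < s) : f s = f 1 * Gamma s := by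
  have h₁ : 0 < f 1 := hf_pos one_pos
  have hconv : ConvexOn ℝ (Set.Ioi 0) (log ∘ fun y ↦ f y / f 1) := by
    refine (hf_conv.add_const (-log (f 1))).congr fun y hy ↦ ?_
    simp [log_div (hf_pos hy).ne' h₁.ne', sub_eq_add_neg]
  have h := eq_Gamma_of_log_convex hconv (fun hy ↦ by rw [hf_feq hy, mul_div_assoc])
    (fun hy ↦ div_pos (hf_pos hy) h₁) (div_self h₁.ne') hs
  rw [← h, mul_div_cancel₀ _ h₁.ne']

theorem convexOn_finset_sum {𝕜 E β ι : Type*} [Semiring 𝕜] [PartialOrder 𝕜] [AddCommMonoid E]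
    [AddCommMonoid β] [PartialOrder β] [IsOrderedAddMonoid β] [SMul 𝕜 E] [Module 𝕜 β]
    {s : Set E} (hs : Convex 𝕜 s) {t : Finset ι} {f : ι → E → β}
    (hf : ∀ i ∈ t, ConvexOn 𝕜 s (f i)) : ConvexOn 𝕜 s (∑ i ∈ t, f i) :=
  sum_induction f (ConvexOn 𝕜 s) (fun _ _ ↦ ConvexOn.add) (convexOn_const 0 hs) hf

theorem convexOn_log_Gamma_mul_add {a b : ℝ} (ha : 0 < a) (hb : 0 ≤ b) :
    ConvexOn ℝ (Set.Ioi 0) fun s ↦ log (Gamma (a * s + b)) :=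
  (convexOn_log_Gamma.comp_affineMap (a • AffineMap.id ℝ ℝ + AffineMap.const ℝ ℝ b)).subset
    (fun s (hs : 0 < s) ↦ show 0 < a * s + b by positivity) (convex_Ioi 0)

/-- The product of Gamma values in Gauss' multiplication formula, rescaled by a power of `n` and
written in the variable `s` for which it is proportional to `Γ(s)`. The usual form of the formula
evaluates it at `n * s`. -/
noncomputable def gaussProd (n : ℕ) (s : ℝ) : ℝ :=
  n ^ s * ∏ k ∈ range n, Gamma ((s + k) / n)

variable {n : ℕ} {s : ℝ}

theorem gaussProd_pos (hn : n ≠ 0) (hs : 0 < s) : 0 < gaussProd n s :=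
  mul_pos (by positivity) (prod_pos fun k _ ↦ by positivity)

theorem gaussProd_add_one (hn : n ≠ 0) (hs : 0 < s) :
    gaussProd n (s + 1) = s * gaussProd n s := by
  have hn₀ : (n : ℝ) ≠ 0 := mod_cast hn
  have hlast : Gamma ((s + n) / n) = s / n * Gamma (s / n) := by
    rw [add_div, div_self hn₀, Gamma_add_one (by positivity)]
  have hshift : (∏ k ∈ range n, Gamma ((s + 1 + k) / n)) * Gamma (s / n) =
      (∏ k ∈ range n, Gamma ((s + k) / n)) * (s / n * Gamma (s / n)) := by
    rw [← hlast, ← prod_range_succ (fun k : ℕ ↦ Gamma ((s + k) / n)), prod_range_succ']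
    simp only [Nat.cast_add, Nat.cast_one, Nat.cast_zero, add_zero, add_assoc, add_comm (1 : ℝ)]
  have hΓ : Gamma (s / n) ≠ 0 := by positivity
  rw [← mul_assoc] at hshift
  rw [gaussProd, gaussProd, mul_right_cancel₀ hΓ hshift, rpow_add_one hn₀]
  field_simp

theorem convexOn_log_gaussProd (hn : n ≠ 0) :
    ConvexOn ℝ (Set.Ioi 0) (log ∘ gaussProd n) := by
  have hn₀ : (0 : ℝ) < n := by positivity
  have hsum := convexOn_finset_sum (convex_Ioi (0 : ℝ)) fun k (_ : k ∈ range n) ↦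
    convexOn_log_Gamma_mul_add (inv_pos.2 hn₀) (div_nonneg k.cast_nonneg hn₀.le)
  have hlin := (LinearMap.mulRight ℝ (log n)).convexOn (convex_Ioi 0)
  refine (hlin.add hsum).congr fun s (hs : 0 < s) ↦ ?_
  have hΓ : ∀ k ∈ range n, Gamma ((s + k) / n) ≠ 0 := fun k _ ↦ by positivity
  simp only [Pi.add_apply, Finset.sum_apply, LinearMap.mulRight_apply, Function.comp_apply,
    gaussProd]
  rw [log_mul (by positivity) (prod_ne_zero_iff.2 hΓ), log_rpow hn₀, log_prod hΓ]
  simp only [add_div, div_eq_inv_mul s]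

theorem gaussProd_one (hn : n ≠ 0) :
    gaussProd n 1 = (2 * π) ^ (((n : ℝ) - 1) / 2) * (n : ℝ) ^ (1 / 2 : ℝ) := by
  obtain ⟨m, rfl⟩ := Nat.exists_eq_add_one_of_ne_zero hn
  have hm : (0 : ℝ) < m + 1 := by positivity
  have hprod : ∏ k ∈ range (m + 1), Gamma ((1 + k) / (m + 1)) = √((2 * π) ^ m / (m + 1)) := by
    rw [prod_range_succ, add_comm 1 (m : ℝ), div_self hm.ne', Gamma_one, mul_one,
      ← prod_Gamma_add_one_div_add_one]
    simp only [add_comm (1 : ℝ)]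
  have hpow : √((2 * π) ^ m) = (2 * π) ^ ((m : ℝ) / 2) := by
    rw [sqrt_eq_rpow, ← rpow_natCast_mul (by positivity), mul_one_div]
  rw [gaussProd, rpow_one]
  push_cast
  rw [hprod, add_sub_cancel_right, sqrt_div (by positivity), hpow, ← sqrt_eq_rpow,
    mul_div_left_comm, div_sqrt]

theorem gaussProd_eq_mul_Gamma (hn : n ≠ 0) (hs : 0 < s) :
    gaussProd n s = (2 * π) ^ (((n : ℝ) - 1) / 2) * (n : ℝ) ^ (1 / 2 : ℝ) * Gamma s := by
  rw [← gaussProd_one hn]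
  exact eq_mul_Gamma_of_log_convex (convexOn_log_gaussProd hn) (gaussProd_add_one hn)
    (gaussProd_pos hn) hs

theorem prod_Gamma_add_div (hn : n ≠ 0) (hs : 0 < s) :
    ∏ k ∈ range n, Gamma (s + k / n) =
      (2 * π) ^ (((n : ℝ) - 1) / 2) * (n : ℝ) ^ (1 / 2 - n * s) * Gamma (n * s) := by
  have hn₀ : (0 : ℝ) < n := by positivity
  have h := gaussProd_eq_mul_Gamma hn (mul_pos hn₀ hs)
  simp only [gaussProd, add_div, mul_div_cancel_left₀ s hn₀.ne'] at h
  rw [rpow_sub hn₀, mul_div_assoc', div_mul_eq_mul_div, ← h, mul_div_cancel_left₀ _ (by positivity)]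

theorem Gamma_triplication (hs : 0 < s) :
    Gamma s * Gamma (s + 1 / 3) * Gamma (s + 2 / 3) =
      2 * π * 3 ^ (1 / 2 - 3 * s) * Gamma (3 * s) := by
  convert prod_Gamma_add_div three_ne_zero hs using 1 <;> norm_num [prod_range_succ]

theorem Gamma_quintuplication (hs : 0 < s) :
    Gamma s * Gamma (s + 1 / 5) * Gamma (s + 2 / 5) * Gamma (s + 3 / 5) * Gamma (s + 4 / 5) =
      (2 * π) ^ 2 * 5 ^ (1 / 2 - 5 * s) * Gamma (5 * s) := by
  convert prod_Gamma_add_div (n := 5) (by norm_num) hs using 1 <;> norm_num [prod_range_succ]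

end MultiplicationFormula

theorem sin_sq_pi_div_five : sin (π / 5) ^ 2 = (5 - √5) / 8 := by
  have h₅ : √5 ^ 2 = (5 : ℝ) := sq_sqrt (by norm_num)
  rw [sin_sq, cos_pi_div_five]
  linear_combination -h₅ / 16

theorem cos_two_mul_pi_div_five : cos (2 * (π / 5)) = (√5 - 1) / 4 := by
  rw [cos_two_mul', cos_pi_div_five, sin_sq_pi_div_five]
  have h₅ : √5 ^ 2 = (5 : ℝ) := sq_sqrt (by norm_num)
  linear_combination h₅ / 16

theorem sqrt_five_add_two_mul_sqrt_five : √(5 + 2 * √5) = sin (π / 5) * (3 + √5) := by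
  have h₅ : √5 ^ 2 = (5 : ℝ) := sq_sqrt (by norm_num)
  have hsin : 0 < sin (π / 5) := sin_pos_of_pos_of_lt_pi (by positivity) (by linarith [pi_pos])
  rw [sqrt_eq_iff_eq_sq (by positivity) (by positivity), mul_pow, sin_sq_pi_div_five]
  linear_combination (√5 + 1) / 8 * h₅

theorem two_mul_sin_sq_seven_mul_pi_div_fifteen :
    2 * sin (π * (7 / 15)) ^ 2 = (7 + √5) / 8 + √3 * (1 + √5) / 4 * sin (π / 5) := by
  rw [sin_sq_eq_half_sub, show 2 * (π * (7 / 15)) = π - (2 * (π / 5) - π / 3) by ring,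
    cos_pi_sub, cos_sub, cos_two_mul_pi_div_five, sin_two_mul, cos_pi_div_five, cos_pi_div_three,
    sin_pi_div_three]
  ring

theorem two_mul_sin_two_mul_pi_div_fifteen_mul_sin_four_mul_pi_div_fifteen :
    2 * sin (π * (2 / 15)) * sin (π * (4 / 15)) = (3 - √5) / 8 + √3 / 2 * sin (π / 5) := by
  rw [two_mul_sin_mul_sin, show π * (2 / 15) - π * (4 / 15) = π / 5 - π / 3 by ring,
    show π * (2 / 15) + π * (4 / 15) = 2 * (π / 5) by ring, cos_sub, cos_two_mul_pi_div_five,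
    cos_pi_div_five, cos_pi_div_three, sin_pi_div_three]
  ring

theorem sin_mul_sin_fifteenths_eq_radicals :
    128 * √5 * sin (π * (7 / 15)) ^ 2 * sin (π * (1 / 5)) * sin (π * (2 / 15)) *
      sin (π * (4 / 15)) = (5 + √5) * (√15 + √(5 + 2 * √5)) := by
  have h₃ : √3 ^ 2 = (3 : ℝ) := sq_sqrt (by norm_num)
  have h₅ : √5 ^ 2 = (5 : ℝ) := sq_sqrt (by norm_num)
  have h₁₅ : √15 = √3 * √5 := by rw [← sqrt_mul (by norm_num)]; norm_num
  have hsin_sq := sin_sq_pi_div_five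
  rw [mul_one_div, h₁₅, sqrt_five_add_two_mul_sqrt_five]
  calc 128 * √5 * sin (π * (7 / 15)) ^ 2 * sin (π / 5) * sin (π * (2 / 15)) * sin (π * (4 / 15))
      = 32 * √5 * sin (π / 5) * (2 * sin (π * (7 / 15)) ^ 2) *
          (2 * sin (π * (2 / 15)) * sin (π * (4 / 15))) := by ring
    _ = √5 / 2 * sin (π / 5) *
          ((7 + √5 + 2 * √3 * (1 + √5) * sin (π / 5)) * (3 - √5 + 4 * √3 * sin (π / 5))) := by
        rw [two_mul_sin_sq_seven_mul_pi_div_fifteen,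
          two_mul_sin_two_mul_pi_div_fifteen_mul_sin_four_mul_pi_div_fifteen]
        ring
    _ = √5 / 2 * sin (π / 5) * (8 * (2 + √5) + 8 * (3 + √5) * √3 * sin (π / 5)) := by
        congr 1
        linear_combination 8 * (1 + √5) * sin (π / 5) ^ 2 * h₃ + 24 * (1 + √5) * hsin_sq
          - (4 + 2 * √3 * sin (π / 5)) * h₅
    _ = (5 + √5) * (√3 * √5 + sin (π / 5) * (3 + √5)) := by
        linear_combination 4 * √5 * (3 + √5) * √3 * hsin_sq
          + (3 * sin (π / 5) - √3 * √5 / 2) * h₅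

theorem Gamma_one_fifteenth_mul_Gamma_seven_fifteenths_mul_Gamma_two_fifteenths :
    Gamma (1 / 15) * Gamma (7 / 15) * Gamma (2 / 15) =
      4 * 3 ^ (2 / 5 : ℝ) * sin (π * (1 / 5)) * sin (π * (4 / 15)) * Gamma (1 / 5) ^ 2 *
        Gamma (4 / 15) := by
  have hmul₁ : Gamma (1 / 15) * Gamma (2 / 5) * Gamma (11 / 15) =
      2 * π * 3 ^ (3 / 10 : ℝ) * Gamma (1 / 5) := by
    convert Gamma_triplication (s := 1 / 15) (by norm_num) using 3 <;> norm_num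
  have hmul₂ : Gamma (2 / 15) * Gamma (7 / 15) * Gamma (4 / 5) =
      2 * π * 3 ^ (1 / 10 : ℝ) * Gamma (2 / 5) := by
    convert Gamma_triplication (s := 2 / 15) (by norm_num) using 3 <;> norm_num
  have hrefl₁ := Gamma_mul_Gamma_mul_sin_pi (x := 1 / 5) (y := 4 / 5)
    (by norm_num) (by norm_num) (by norm_num)
  have hrefl₂ := Gamma_mul_Gamma_mul_sin_pi (x := 4 / 15) (y := 11 / 15)
    (by norm_num) (by norm_num) (by norm_num)
  have hpow : (3 : ℝ) ^ (2 / 5 : ℝ) = 3 ^ (3 / 10 : ℝ) * 3 ^ (1 / 10 : ℝ) := by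
    rw [← rpow_add three_pos]
    norm_num
  have hne : Gamma (2 / 5) * π ^ 2 ≠ 0 := by positivity
  apply mul_right_cancel₀ hne
  calc Gamma (1 / 15) * Gamma (7 / 15) * Gamma (2 / 15) * (Gamma (2 / 5) * π ^ 2)
      = Gamma (1 / 15) * Gamma (7 / 15) * Gamma (2 / 15) * Gamma (2 / 5) *
          ((Gamma (1 / 5) * Gamma (4 / 5) * sin (π * (1 / 5))) *
            (Gamma (4 / 15) * Gamma (11 / 15) * sin (π * (4 / 15)))) := by
        rw [hrefl₁, hrefl₂]
        ring
    _ = (Gamma (1 / 15) * Gamma (2 / 5) * Gamma (11 / 15)) *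
          (Gamma (2 / 15) * Gamma (7 / 15) * Gamma (4 / 5)) *
          (sin (π * (1 / 5)) * sin (π * (4 / 15)) * Gamma (1 / 5) * Gamma (4 / 15)) := by ring
    _ = _ := by
        rw [hmul₁, hmul₂, hpow]
        ring

theorem Gamma_one_fifteenth_mul_Gamma_seven_fifteenths_mul_Gamma_four_fifteenths :
    Gamma (1 / 15) * Gamma (7 / 15) * Gamma (4 / 15) =
      4 * 5 ^ (1 / 6 : ℝ) * sin (π * (1 / 3)) * sin (π * (2 / 15)) * Gamma (1 / 3) ^ 2 *
        Gamma (2 / 15) := by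
  have hmul : Gamma (1 / 15) * Gamma (4 / 15) * Gamma (7 / 15) * Gamma (2 / 3) * Gamma (13 / 15) =
      (2 * π) ^ 2 * 5 ^ (1 / 6 : ℝ) * Gamma (1 / 3) := by
    convert Gamma_quintuplication (s := 1 / 15) (by norm_num) using 3 <;> norm_num
  have hrefl₁ := Gamma_mul_Gamma_mul_sin_pi (x := 1 / 3) (y := 2 / 3)
    (by norm_num) (by norm_num) (by norm_num)
  have hrefl₂ := Gamma_mul_Gamma_mul_sin_pi (x := 2 / 15) (y := 13 / 15)
    (by norm_num) (by norm_num) (by norm_num)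
  apply mul_right_cancel₀ (pow_ne_zero 2 pi_ne_zero)
  calc Gamma (1 / 15) * Gamma (7 / 15) * Gamma (4 / 15) * π ^ 2
      = Gamma (1 / 15) * Gamma (7 / 15) * Gamma (4 / 15) *
          ((Gamma (1 / 3) * Gamma (2 / 3) * sin (π * (1 / 3))) *
            (Gamma (2 / 15) * Gamma (13 / 15) * sin (π * (2 / 15)))) := by
        rw [hrefl₁, hrefl₂]
        ring
    _ = (Gamma (1 / 15) * Gamma (4 / 15) * Gamma (7 / 15) * Gamma (2 / 3) * Gamma (13 / 15)) *
          (sin (π * (1 / 3)) * sin (π * (2 / 15)) * Gamma (1 / 3) * Gamma (2 / 15)) := by ring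
    _ = _ := by
        rw [hmul]
        ring

theorem sq_Gamma_one_fifteenth_mul_Gamma_seven_fifteenths :
    (Gamma (1 / 15) * Gamma (7 / 15)) ^ 2 =
      16 * 3 ^ (2 / 5 : ℝ) * 5 ^ (1 / 6 : ℝ) *
        (sin (π * (1 / 5)) * sin (π * (1 / 3)) * sin (π * (2 / 15)) * sin (π * (4 / 15))) *
        (Gamma (1 / 3) * Gamma (1 / 5)) ^ 2 := by
  have hne : Gamma (2 / 15) * Gamma (4 / 15) ≠ 0 := by positivity
  apply mul_right_cancel₀ hne
  calc (Gamma (1 / 15) * Gamma (7 / 15)) ^ 2 * (Gamma (2 / 15) * Gamma (4 / 15))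
      = (Gamma (1 / 15) * Gamma (7 / 15) * Gamma (2 / 15)) *
          (Gamma (1 / 15) * Gamma (7 / 15) * Gamma (4 / 15)) := by ring
    _ = _ := by
        rw [Gamma_one_fifteenth_mul_Gamma_seven_fifteenths_mul_Gamma_two_fifteenths,
          Gamma_one_fifteenth_mul_Gamma_seven_fifteenths_mul_Gamma_four_fifteenths]
        ring

theorem Gamma_one_thirtieth_mul_sqrt_pi :
    Gamma (1 / 30) * √π =
      2 ^ (14 / 15 : ℝ) * sin (π * (7 / 15)) * (Gamma (1 / 15) * Gamma (7 / 15)) := by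
  have hdup : Gamma (1 / 30) * Gamma (8 / 15) = Gamma (1 / 15) * 2 ^ (14 / 15 : ℝ) * √π := by
    convert Gamma_mul_Gamma_add_half (1 / 30) using 3 <;> norm_num
  have hrefl := Gamma_mul_Gamma_mul_sin_pi (x := 7 / 15) (y := 8 / 15)
    (by norm_num) (by norm_num) (by norm_num)
  apply mul_right_cancel₀ (sqrt_pos.2 pi_pos).ne'
  calc Gamma (1 / 30) * √π * √π
      = Gamma (1 / 30) * (Gamma (7 / 15) * Gamma (8 / 15) * sin (π * (7 / 15))) := by
        rw [mul_assoc, mul_self_sqrt pi_pos.le, hrefl]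
    _ = _ := by linear_combination Gamma (7 / 15) * sin (π * (7 / 15)) * hdup

theorem sq_Gamma_one_thirtieth_mul_eq :
    (Gamma (1 / 30) * (√π * 2 ^ (16 / 15 : ℝ) * 5 ^ (1 / 6 : ℝ))) ^ 2 =
      (3 ^ (9 / 20 : ℝ) * √(5 + √5) * √(√15 + √(5 + 2 * √5)) *
        Gamma (1 / 3) * Gamma (1 / 5)) ^ 2 := by
  have hpow₂ : (2 : ℝ) ^ (14 / 15 : ℝ) * 2 ^ (16 / 15 : ℝ) = 4 := by
    rw [← rpow_add two_pos]
    norm_num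
  have hpow₃ : (3 : ℝ) ^ (2 / 5 : ℝ) * √3 = (3 ^ (9 / 20 : ℝ)) ^ 2 := by
    rw [sqrt_eq_rpow, ← rpow_add three_pos, ← rpow_mul_natCast three_pos.le]
    norm_num
  have hpow₅ : (5 : ℝ) ^ (1 / 6 : ℝ) * (5 ^ (1 / 6 : ℝ)) ^ 2 = √5 := by
    rw [← pow_succ', ← rpow_mul_natCast (by norm_num), sqrt_eq_rpow]
    norm_num
  calc (Gamma (1 / 30) * (√π * 2 ^ (16 / 15 : ℝ) * 5 ^ (1 / 6 : ℝ))) ^ 2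
      = (Gamma (1 / 30) * √π) ^ 2 * (2 ^ (16 / 15 : ℝ)) ^ 2 * (5 ^ (1 / 6 : ℝ)) ^ 2 := by ring
    _ = (2 ^ (14 / 15 : ℝ) * 2 ^ (16 / 15 : ℝ)) ^ 2 * (3 ^ (2 / 5 : ℝ) * √3) *
          (5 ^ (1 / 6 : ℝ) * (5 ^ (1 / 6 : ℝ)) ^ 2) *
          (8 * sin (π * (7 / 15)) ^ 2 * sin (π * (1 / 5)) * sin (π * (2 / 15)) *
            sin (π * (4 / 15))) * (Gamma (1 / 3) * Gamma (1 / 5)) ^ 2 := by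
        rw [Gamma_one_thirtieth_mul_sqrt_pi, mul_pow _ (Gamma (1 / 15) * Gamma (7 / 15)),
          sq_Gamma_one_fifteenth_mul_Gamma_seven_fifteenths, mul_one_div π 3, sin_pi_div_three]
        ring
    _ = (3 ^ (9 / 20 : ℝ)) ^ 2 * ((5 + √5) * (√15 + √(5 + 2 * √5))) *
          (Gamma (1 / 3) * Gamma (1 / 5)) ^ 2 := by
        rw [hpow₂, hpow₃, hpow₅, ← sin_mul_sin_fifteenths_eq_radicals]
        ring
    _ = _ := by
        simp only [mul_pow, sq_sqrt (show 0 ≤ 5 + √5 by positivity),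
          sq_sqrt (show 0 ≤ √15 + √(5 + 2 * √5) by positivity)]
        ring

theorem gamma_one_thirtieth :
    Real.Gamma (1/30) =
      ((3:ℝ) ^ ((9:ℝ)/20) * Real.sqrt (5 + Real.sqrt 5) *
          Real.sqrt (Real.sqrt 15 + Real.sqrt (5 + 2 * Real.sqrt 5)) /
          (Real.sqrt π * (2:ℝ) ^ ((16:ℝ)/15) * (5:ℝ) ^ ((1:ℝ)/6))) *
        Real.Gamma (1/3) * Real.Gamma (1/5) := by
  rw [div_mul_eq_mul_div, div_mul_eq_mul_div, eq_div_iff (by positivity)]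
  exact (pow_left_inj₀ (by positivity) (by positivity) two_ne_zero).1 sq_Gamma_one_thirtieth_mul_eq
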